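/- In the CAR algebra A over Z^ν: (1) for a finite subset I, the commutant of A(I) in A equals A(I^c)₊ + v_I A(I^c)₋, where v_I = ∏_{i∈I}(a_i*a_i − a_i a_i*); (2) for an infinite subset I, the commutant of A(I) in A equals A(I^c)₊. -/

import Mathlib

/-!
Replace each pair `a i`, `a i*` by the two Majorana operators `a i + a i*` and `i (a i - a i*)`.
These are odd self-adjoint unitaries that anticommute pairwise, and those over `K` generate `A(K)`;
the CAR algebra is thus treated as a Clifford algebra (`CliffordSystem`).

Say that `x` graded-commutes with a generator `g` if `g Θ(x) = x g`. The main point is that `A(Kᶜ)`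
is exactly the set of elements graded-commuting with all generators over `K`, for every `K`.
One inclusion holds on generators and passes to the closure (`graded_comm`). For the other
(`mem_closure_of_graded_comm`), the map `x ↦ g Θ(x) g` is an isometric automorphism which negates
`g` and fixes the other generators, so averaging over it is a contraction that removes `g` from
polynomials in the generators. If `x` graded-commutes with every generator over `K`, all these
averages fix `x`; applied to a polynomial near `x`, they give a polynomial in the generators over
`Kᶜ` at least as near to `x`.

If `x` commutes with `A(I)`, so do its even and odd parts. The even part then graded-commutes with
the generators over `I`, hence lies in `A(Iᶜ)`. For finite `I`, the unitary `v_I` is even, squares to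
`1` and anticommutes with every generator over `I`, so `v_I` times the odd part is odd and
graded-commutes with them, hence lies in `A(Iᶜ)`. For infinite `I` the odd part `d` vanishes
(`eq_zero_of_odd`): it is close to a polynomial `y` in the generators over a finite set `F`, and for a
generator `g` over `I \ F` the isometry `x ↦ g Θ(x) g` fixes `y` but negates `d`.
-/

/-- The C*-subalgebra `A(I)` of the CAR algebra associated to a region `I ⊆ ℤ^ν`. -/
noncomputable def carSub {ν : ℕ} {A : Type*} [CStarAlgebra A]
    (a : (Fin ν → ℤ) → A) (I : Set (Fin ν → ℤ)) : StarSubalgebra ℂ A :=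
  (StarAlgebra.adjoin ℂ (a '' I)).topologicalClosure

/-- The self-adjoint unitary `v_I = ∏_{i ∈ I} (a_i* a_i − a_i a_i*)` associated to a finite
region `I` (the factors are even and mutually commute, so the order is irrelevant). -/
noncomputable def carParityUnitary {ν : ℕ} {A : Type*} [CStarAlgebra A]
    (a : (Fin ν → ℤ) → A) (I : Finset (Fin ν → ℤ)) : A :=
  (I.toList.map (fun i => star (a i) * a i - a i * star (a i))).prod

/-! ### Graded commutants in a Clifford algebra -/

/-- The algebra generated (without closure) by the family `g` over the index set `T`. -/
def cliffAlg {κ A : Type*} [CStarAlgebra A] (g : κ → A) (T : Set κ) : Subalgebra ℂ A :=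
  Algebra.adjoin ℂ (g '' T)

/-- The data of a parity automorphism `Θ` and of a family `g` of odd self-adjoint unitaries that
anticommute pairwise and generate a dense subalgebra. -/
structure CliffordSystem {κ A : Type*} [CStarAlgebra A] (g : κ → A) (Θ : A ≃⋆ₐ[ℂ] A) : Prop where
  sa : ∀ k, star (g k) = g k
  sq : ∀ k, g k * g k = 1
  anti : ∀ k l, k ≠ l → g k * g l = -(g l * g k)
  odd : ∀ k, Θ (g k) = -g k
  dense : ∀ x : A, x ∈ closure (cliffAlg g Set.univ : Set A)

lemma cliffAlg_mono {κ A : Type*} [CStarAlgebra A] (g : κ → A) {S T : Set κ} (h : S ⊆ T) :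
    cliffAlg g S ≤ cliffAlg g T :=
  Algebra.adjoin_mono (Set.image_mono h)

lemma parity_continuous {A : Type*} [CStarAlgebra A] (Θ : A ≃⋆ₐ[ℂ] A) : Continuous Θ :=
  (StarAlgEquiv.isometry Θ).continuous

lemma exists_finset_mem_cliffAlg {κ A : Type*} [CStarAlgebra A] {g : κ → A} {x : A}
    (hx : x ∈ cliffAlg g Set.univ) : ∃ F : Finset κ, x ∈ cliffAlg g (F : Set κ) := by
  classical
  induction hx using Algebra.adjoin_induction with
  | mem x hx =>
    obtain ⟨k, -, rfl⟩ := hx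
    exact ⟨{k}, Algebra.subset_adjoin ⟨k, by simp, rfl⟩⟩
  | algebraMap r => exact ⟨∅, Subalgebra.algebraMap_mem _ r⟩
  | add x y _ _ hx hy =>
    obtain ⟨F, hF⟩ := hx
    obtain ⟨G, hG⟩ := hy
    exact ⟨F ∪ G, add_mem (cliffAlg_mono g (by simp) hF) (cliffAlg_mono g (by simp) hG)⟩
  | mul x y _ _ hx hy =>
    obtain ⟨F, hF⟩ := hx
    obtain ⟨G, hG⟩ := hy
    exact ⟨F ∪ G, mul_mem (cliffAlg_mono g (by simp) hF) (cliffAlg_mono g (by simp) hG)⟩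

namespace CliffordSystem

variable {κ A : Type*} [CStarAlgebra A] {g : κ → A} {Θ : A ≃⋆ₐ[ℂ] A}

lemma mem_unitary (h : CliffordSystem g Θ) (k : κ) : g k ∈ unitary A := by
  rw [Unitary.mem_iff]
  simp [h.sa, h.sq]

lemma parity_mem (h : CliffordSystem g Θ) {T : Set κ} {x : A} (hx : x ∈ cliffAlg g T) :
    Θ x ∈ cliffAlg g T := by
  induction hx using Algebra.adjoin_induction with
  | mem x hx =>
    obtain ⟨k, hk, rfl⟩ := hx
    rw [h.odd]
    exact neg_mem (Algebra.subset_adjoin ⟨k, hk, rfl⟩)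
  | algebraMap r =>
    rw [AlgHomClass.commutes Θ r]
    exact Subalgebra.algebraMap_mem _ r
  | add x y _ _ hx hy => rw [map_add]; exact add_mem hx hy
  | mul x y _ _ hx hy => rw [map_mul]; exact mul_mem hx hy

lemma parity_parity (h : CliffordSystem g Θ) (x : A) : Θ (Θ x) = x := by
  have hcl : IsClosed {x : A | Θ (Θ x) = x} :=
    isClosed_eq ((parity_continuous Θ).comp (parity_continuous Θ)) continuous_id
  refine closure_minimal (fun x hx => ?_) hcl (h.dense x)
  change Θ (Θ x) = x
  induction hx using Algebra.adjoin_induction with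
  | mem x hx =>
    obtain ⟨k, hk, rfl⟩ := hx
    simp [h.odd]
  | algebraMap r => simp only [AlgHomClass.commutes]
  | add x y _ _ hx hy => simp only [map_add, hx, hy]
  | mul x y _ _ hx hy => simp only [map_mul, hx, hy]

/-- Elements of the closed algebra over `T` graded-commute with every generator outside `T`. -/
lemma graded_comm (h : CliffordSystem g Θ) {T : Set κ} {k : κ} (hk : k ∉ T) {x : A}
    (hx : x ∈ closure (cliffAlg g T : Set A)) : g k * Θ x = x * g k := by
  have hcl : IsClosed {x : A | g k * Θ x = x * g k} :=
    isClosed_eq (continuous_const.mul (parity_continuous Θ)) (continuous_id.mul continuous_const)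
  refine closure_minimal (fun x hx => ?_) hcl hx
  change g k * Θ x = x * g k
  induction hx using Algebra.adjoin_induction with
  | mem x hx =>
    obtain ⟨l, hl, rfl⟩ := hx
    rw [h.odd, mul_neg, h.anti k l (by rintro rfl; exact hk hl), neg_neg]
  | algebraMap r => rw [AlgHomClass.commutes Θ r, Algebra.commutes]
  | add x y _ _ hx hy => rw [map_add, mul_add, add_mul, hx, hy]
  | mul x y _ _ hx hy => rw [map_mul, ← mul_assoc, hx, mul_assoc, hy, mul_assoc]

lemma exists_decomp (h : CliffordSystem g Θ) {T : Set κ} (k : κ) {x : A}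
    (hx : x ∈ cliffAlg g T) :
    ∃ p ∈ cliffAlg g (T \ {k}), ∃ q ∈ cliffAlg g (T \ {k}), x = p + g k * q := by
  have gc : ∀ y ∈ cliffAlg g (T \ {k}), y * g k = g k * Θ y := fun y hy =>
    (h.graded_comm (by simp) (subset_closure hy)).symm
  induction hx using Algebra.adjoin_induction with
  | mem x hx =>
    obtain ⟨l, hl, rfl⟩ := hx
    by_cases hlk : l = k
    · subst hlk
      exact ⟨0, zero_mem _, 1, one_mem _, by simp⟩
    · exact ⟨g l, Algebra.subset_adjoin ⟨l, ⟨hl, hlk⟩, rfl⟩, 0, zero_mem _, by simp⟩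
  | algebraMap r => exact ⟨_, Subalgebra.algebraMap_mem _ r, 0, zero_mem _, by simp⟩
  | add x y _ _ hx hy =>
    obtain ⟨p, hp, q, hq, rfl⟩ := hx
    obtain ⟨p', hp', q', hq', rfl⟩ := hy
    exact ⟨p + p', add_mem hp hp', q + q', add_mem hq hq', by rw [mul_add]; abel⟩
  | mul x y _ _ hx hy =>
    obtain ⟨p, hp, q, hq, rfl⟩ := hx
    obtain ⟨p', hp', q', hq', rfl⟩ := hy
    refine ⟨p * p' + Θ q * q', add_mem (mul_mem hp hp') (mul_mem (h.parity_mem hq) hq'),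
      q * p' + Θ p * q', add_mem (mul_mem hq hp') (mul_mem (h.parity_mem hp) hq'), ?_⟩
    have e1 : p * (g k * q') = g k * (Θ p * q') := by
      rw [← mul_assoc, gc p hp, mul_assoc]
    have e2 : g k * q * (g k * q') = Θ q * q' := by
      rw [mul_assoc, ← mul_assoc q, gc q hq, ← mul_assoc, ← mul_assoc, h.sq, one_mul]
    rw [add_mul, mul_add, mul_add, e1, e2, mul_add, mul_assoc (g k) q p']
    abel

/-- Averaging over the automorphism `x ↦ g k * Θ x * g k`, which negates `g k` and fixes all other
generators, removes the generator `g k`. -/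
lemma average_mem (h : CliffordSystem g Θ) {T : Set κ} (k : κ) {x : A}
    (hx : x ∈ cliffAlg g T) :
    (1 / 2 : ℂ) • (x + g k * Θ x * g k) ∈ cliffAlg g (T \ {k}) := by
  obtain ⟨p, hp, q, hq, rfl⟩ := h.exists_decomp k hx
  have gc : ∀ y ∈ cliffAlg g (T \ {k}), g k * Θ y = y * g k := fun y hy =>
    h.graded_comm (by simp) (subset_closure hy)
  have e1 : g k * Θ p * g k = p := by rw [gc p hp, mul_assoc, h.sq, mul_one]
  have e2 : g k * Θ (g k * q) * g k = -(g k * q) := by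
    rw [map_mul, h.odd, neg_mul, gc q hq, mul_neg, neg_mul, mul_assoc, mul_assoc q, h.sq, mul_one]
  have : (1 / 2 : ℂ) • (p + g k * q + g k * Θ (p + g k * q) * g k) = p := by
    rw [map_add, mul_add, add_mul, e1, e2]
    have : p + g k * q + (p + -(g k * q)) = (2 : ℂ) • p := by rw [two_smul]; abel
    rw [this, smul_smul]; norm_num
  rw [this]
  exact hp

lemma norm_conj (h : CliffordSystem g Θ) (k : κ) (x : A) : ‖g k * Θ x * g k‖ = ‖x‖ := by
  rw [CStarRing.norm_mul_mem_unitary _ (h.mem_unitary k),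
    CStarRing.norm_mem_unitary_mul _ (h.mem_unitary k)]
  exact StarAlgEquiv.norm_map Θ x

lemma exists_approx (h : CliffordSystem g Θ) {T : Set κ} {x y : A} (F G : Finset κ)
    (hG : (G : Set κ) ⊆ T) (hx : ∀ k ∈ T, g k * Θ x = x * g k)
    (hy : y ∈ cliffAlg g (F : Set κ)) :
    ∃ z ∈ cliffAlg g ((F : Set κ) \ G), ‖x - z‖ ≤ ‖x - y‖ := by
  classical
  induction G using Finset.induction_on with
  | empty => exact ⟨y, by simpa using hy, le_rfl⟩
  | insert k G _ ih =>
    obtain ⟨z, hz, hzn⟩ := ih (fun l hl => hG (by simp [Finset.mem_coe.1 hl]))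
    refine ⟨_, cliffAlg_mono g ?_ (h.average_mem k hz), le_trans ?_ hzn⟩
    · intro l hl
      simp only [Set.mem_sdiff, Finset.mem_coe, Set.mem_singleton_iff, Finset.mem_insert] at hl ⊢
      tauto
    · have hfix : g k * Θ x * g k = x := by
        rw [hx k (hG (by simp)), mul_assoc, h.sq, mul_one]
      have : x - (1 / 2 : ℂ) • (z + g k * Θ z * g k)
          = (1 / 2 : ℂ) • ((x - z) + g k * Θ (x - z) * g k) := by
        rw [map_sub, mul_sub, sub_mul, hfix]
        module
      rw [this, norm_smul]
      have h1 := norm_add_le (x - z) (g k * Θ (x - z) * g k)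
      rw [h.norm_conj] at h1
      have h2 : ‖(1 / 2 : ℂ)‖ = 1 / 2 := by norm_num
      rw [h2]
      linarith

/-- The graded commutant of the generators over `T` lies in the closed algebra over `Tᶜ`. -/
lemma mem_closure_of_graded_comm (h : CliffordSystem g Θ) {T : Set κ} {x : A}
    (hx : ∀ k ∈ T, g k * Θ x = x * g k) : x ∈ closure (cliffAlg g Tᶜ : Set A) := by
  classical
  rw [Metric.mem_closure_iff]
  intro ε hε
  obtain ⟨y, hy, hxy⟩ := Metric.mem_closure_iff.1 (h.dense x) ε hε
  obtain ⟨F, hF⟩ := exists_finset_mem_cliffAlg hy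
  obtain ⟨z, hz, hzn⟩ := h.exists_approx F (F.filter (· ∈ T))
    (fun k hk => (Finset.mem_filter.1 hk).2) hx hF
  refine ⟨z, cliffAlg_mono g ?_ hz, ?_⟩
  · intro k hk
    simp only [Set.mem_sdiff, Finset.mem_coe, Finset.mem_filter, not_and] at hk
    exact hk.2 hk.1
  · rw [dist_eq_norm] at hxy ⊢
    exact hzn.trans_lt hxy

/-- An odd element commuting with infinitely many generators vanishes: the automorphism
`y ↦ g k * Θ y * g k` negates it for all `k ∈ T`, but for all but finitely many `k` fixes a given
nearby polynomial in the generators. -/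
lemma eq_zero_of_odd (h : CliffordSystem g Θ) {T : Set κ} (hT : T.Infinite) {d : A}
    (hd : Θ d = -d) (hc : ∀ k ∈ T, g k * d = d * g k) : d = 0 := by
  rw [← norm_le_zero_iff]
  refine le_of_forall_pos_le_add fun ε hε => ?_
  obtain ⟨y, hy, hxy⟩ := Metric.mem_closure_iff.1 (h.dense d) ε hε
  obtain ⟨F, hF⟩ := exists_finset_mem_cliffAlg hy
  obtain ⟨k, hkT, hkF⟩ := hT.exists_notMem_finset F
  have hy' : g k * Θ y * g k = y := by
    rw [h.graded_comm (by simpa using hkF) (subset_closure hF), mul_assoc, h.sq, mul_one]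
  have hd' : g k * Θ d * g k = -d := by
    rw [hd, mul_neg, hc k hkT, neg_mul, mul_assoc, h.sq, mul_one]
  have e : (2 : ℂ) • d = (d - y) - g k * Θ (d - y) * g k := by
    rw [map_sub, mul_sub, sub_mul, hy', hd']
    module
  have h1 := norm_sub_le (d - y) (g k * Θ (d - y) * g k)
  rw [h.norm_conj, ← e, norm_smul] at h1
  rw [dist_eq_norm] at hxy
  have h2 : ‖(2 : ℂ)‖ = 2 := by norm_num
  rw [h2] at h1
  linarith

lemma even_part (h : CliffordSystem g Θ) (x : A) :
    Θ ((1 / 2 : ℂ) • (x + Θ x)) = (1 / 2 : ℂ) • (x + Θ x) := by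
  rw [map_smul, map_add, h.parity_parity, add_comm]

lemma odd_part (h : CliffordSystem g Θ) (x : A) :
    Θ ((1 / 2 : ℂ) • (x - Θ x)) = -((1 / 2 : ℂ) • (x - Θ x)) := by
  rw [map_smul, map_sub, h.parity_parity, ← smul_neg, neg_sub]

lemma comm_parity (h : CliffordSystem g Θ) {k : κ} {x : A} (hx : g k * x = x * g k) :
    g k * Θ x = Θ x * g k := by
  have := congrArg Θ hx
  rwa [map_mul, map_mul, h.odd, neg_mul, mul_neg, neg_inj] at this

end CliffordSystem

/-! ### Majorana operators of a CAR family -/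

/-- The phase of the Majorana operator with label `b`. -/
def majPhase (b : Bool) : ℂ := if b then Complex.I else 1

/-- The two Majorana operators `a + a*` and `i (a - a*)` at each site, written uniformly as
`s a + s̄ a*` with `s = 1` or `s = i`. -/
def majorana {ι A : Type*} [CStarAlgebra A] (a : ι → A) (p : ι × Bool) : A :=
  majPhase p.2 • a p.1 + star (majPhase p.2) • star (a p.1)

lemma majorana_anticomm {ι A : Type*} [DecidableEq ι] [CStarAlgebra A] {a : ι → A}
    (h₁ : ∀ i j, star (a i) * a j + a j * star (a i) = if i = j then (1 : A) else 0)
    (h₂ : ∀ i j, a i * a j + a j * a i = 0) (p q : ι × Bool) :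
    majorana a p * majorana a q + majorana a q * majorana a p
      = (majPhase p.2 * star (majPhase q.2) + star (majPhase p.2) * majPhase q.2) •
        (if p.1 = q.1 then (1 : A) else 0) := by
  have h₃ : star (a p.1) * star (a q.1) + star (a q.1) * star (a p.1) = 0 := by
    rw [← star_mul, ← star_mul, ← star_add, add_comm, add_comm, h₂, star_zero]
  have h₄ : star (a q.1) * a p.1 + a p.1 * star (a q.1) = if p.1 = q.1 then (1 : A) else 0 := by
    rw [h₁]; simp only [eq_comm]
  have e : majorana a p * majorana a q + majorana a q * majorana a p
      = (majPhase p.2 * majPhase q.2) • (a p.1 * a q.1 + a q.1 * a p.1)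
      + (majPhase p.2 * star (majPhase q.2)) • (star (a q.1) * a p.1 + a p.1 * star (a q.1))
      + (star (majPhase p.2) * majPhase q.2) • (star (a p.1) * a q.1 + a q.1 * star (a p.1))
      + (star (majPhase p.2) * star (majPhase q.2)) •
        (star (a p.1) * star (a q.1) + star (a q.1) * star (a p.1)) := by
    simp only [majorana, mul_add, add_mul, smul_mul_smul_comm]
    module
  rw [e, h₂, h₃, h₄, h₁, smul_zero, smul_zero, zero_add, add_zero, add_smul]

lemma annihilator_eq_majorana {ι A : Type*} [CStarAlgebra A] (a : ι → A) (i : ι) :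
    a i = (1 / 2 : ℂ) • (majorana a (i, false) - Complex.I • majorana a (i, true)) := by
  simp only [majorana, majPhase]
  simp only [if_true, Bool.false_eq_true, if_false, smul_add, smul_sub, smul_smul, star_one]
  have hI : star Complex.I = -Complex.I := Complex.conj_I
  rw [hI]
  ring_nf
  simp only [Complex.I_sq]
  module

lemma creator_eq_majorana {ι A : Type*} [CStarAlgebra A] (a : ι → A) (i : ι) :
    star (a i) = (1 / 2 : ℂ) • (majorana a (i, false) + Complex.I • majorana a (i, true)) := by
  simp only [majorana, majPhase]
  simp only [if_true, Bool.false_eq_true, if_false, smul_add, smul_smul, star_one]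
  have hI : star Complex.I = -Complex.I := Complex.conj_I
  rw [hI]
  ring_nf
  simp only [Complex.I_sq]
  module

lemma mem_carSub_iff {ν : ℕ} {A : Type*} [CStarAlgebra A] (a : (Fin ν → ℤ) → A)
    (K : Set (Fin ν → ℤ)) (x : A) :
    x ∈ carSub a K ↔ x ∈ closure (cliffAlg (majorana a) (Prod.fst ⁻¹' K) : Set A) := by
  have key : (StarAlgebra.adjoin ℂ (a '' K)).toSubalgebra
      = cliffAlg (majorana a) (Prod.fst ⁻¹' K) := by
    apply le_antisymm
    · rw [StarAlgebra.adjoin_toSubalgebra]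
      refine Algebra.adjoin_le ?_
      have hm : ∀ i ∈ K, ∀ b, majorana a (i, b) ∈ cliffAlg (majorana a) (Prod.fst ⁻¹' K) :=
        fun i hi b => Algebra.subset_adjoin ⟨(i, b), hi, rfl⟩
      rintro x (⟨i, hi, rfl⟩ | hx)
      · rw [annihilator_eq_majorana a i]
        exact Subalgebra.smul_mem _ (sub_mem (hm i hi _) (Subalgebra.smul_mem _ (hm i hi _) _)) _
      · obtain ⟨i, hi, hx⟩ := hx
        rw [← star_star x, ← hx, creator_eq_majorana a i]
        exact Subalgebra.smul_mem _ (add_mem (hm i hi _) (Subalgebra.smul_mem _ (hm i hi _) _)) _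
    · refine Algebra.adjoin_le ?_
      rintro _ ⟨p, hp, rfl⟩
      have hm : a p.1 ∈ StarAlgebra.adjoin ℂ (a '' K) :=
        StarAlgebra.subset_adjoin ℂ _ ⟨p.1, hp, rfl⟩
      change majorana a p ∈ StarAlgebra.adjoin ℂ (a '' K)
      exact add_mem (SMulMemClass.smul_mem _ hm) (SMulMemClass.smul_mem _ (star_mem hm))
  rw [← key]
  rfl

lemma commutes_carSub_iff {ν : ℕ} {A : Type*} [CStarAlgebra A] (a : (Fin ν → ℤ) → A)
    (K : Set (Fin ν → ℤ)) (x : A) :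
    (∀ y ∈ carSub a K, x * y = y * x) ↔
      ∀ p : (Fin ν → ℤ) × Bool, p.1 ∈ K → majorana a p * x = x * majorana a p := by
  constructor
  · intro h p hp
    exact (h _ ((mem_carSub_iff a K _).2
      (subset_closure (Algebra.subset_adjoin ⟨p, hp, rfl⟩)))).symm
  · intro h y hy
    have hcl : IsClosed {y : A | x * y = y * x} :=
      isClosed_eq (continuous_const.mul continuous_id) (continuous_id.mul continuous_const)
    refine closure_minimal (fun y hy => ?_) hcl ((mem_carSub_iff a K y).1 hy)
    change x * y = y * x
    induction hy using Algebra.adjoin_induction with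
    | mem y hy =>
      obtain ⟨p, hp, rfl⟩ := hy
      exact (h p hp).symm
    | algebraMap r => exact (Algebra.commutes r x).symm
    | add y z _ _ hy hz => rw [mul_add, add_mul, hy, hz]
    | mul y z _ _ hy hz => rw [← mul_assoc, hy, mul_assoc, hz, mul_assoc]

lemma majorana_system {ν : ℕ} {A : Type*} [CStarAlgebra A] (a : (Fin ν → ℤ) → A)
    (hCAR₁ : ∀ i j, star (a i) * a j + a j * star (a i) = if i = j then (1 : A) else 0)
    (hCAR₂ : ∀ i j, a i * a j + a j * a i = 0)
    (hgen : carSub a Set.univ = ⊤)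
    (Θ : A ≃⋆ₐ[ℂ] A)
    (hΘ : ∀ i, Θ (a i) = - a i) : CliffordSystem (majorana a) Θ where
  sa p := by simp [majorana, add_comm]
  sq p := by
    have h := majorana_anticomm hCAR₁ hCAR₂ p p
    have hp : majPhase p.2 * star (majPhase p.2) + star (majPhase p.2) * majPhase p.2 = 2 := by
      rcases p with ⟨i, _ | _⟩ <;> simp [majPhase] <;> norm_num
    rw [hp, if_pos rfl, ← two_smul ℂ] at h
    exact smul_right_injective A (two_ne_zero : (2 : ℂ) ≠ 0) h
  anti p q hpq := by
    have h := majorana_anticomm hCAR₁ hCAR₂ p q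
    rw [eq_neg_iff_add_eq_zero, h]
    rcases p with ⟨i, b⟩
    rcases q with ⟨j, c⟩
    by_cases hij : i = j
    · subst hij
      cases b <;> cases c <;> simp [majPhase] at hpq ⊢
    · simp [hij]
  odd p := by
    simp only [majorana, map_add, map_smul, map_star, hΘ, star_neg, smul_neg, neg_add]
  dense x := by
    have : x ∈ carSub a Set.univ := by rw [hgen]; trivial
    simpa using (mem_carSub_iff a Set.univ x).1 this

/-! ### The parity unitary of a finite region -/

lemma site_eq_majorana {ι A : Type*} [CStarAlgebra A] {a : ι → A}
    (h₂ : ∀ i j, a i * a j + a j * a i = 0) (i : ι) :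
    star (a i) * a i - a i * star (a i)
      = (-Complex.I) • (majorana a (i, false) * majorana a (i, true)) := by
  have h0 : a i * a i = 0 := by
    have := h₂ i i
    rw [← two_smul ℂ] at this
    exact (smul_eq_zero.1 this).resolve_left two_ne_zero
  have h0' : star (a i) * star (a i) = 0 := by rw [← star_mul, h0, star_zero]
  have hI : star Complex.I = -Complex.I := Complex.conj_I
  simp only [majorana, majPhase, if_true, Bool.false_eq_true, if_false, hI, star_one, one_smul,
    mul_add, add_mul, mul_smul_comm, h0, h0', zero_add, add_zero, smul_add, smul_smul]
  simp only [mul_neg, neg_mul, Complex.I_mul_I]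
  module

namespace CliffordSystem

variable {ι A : Type*} [CStarAlgebra A] {g : ι × Bool → A} {Θ : A ≃⋆ₐ[ℂ] A}

/-- The parity operator of a single site, `-i` times the product of its two Majorana operators. -/
def siteParity {ι A : Type*} [CStarAlgebra A] (g : ι × Bool → A) (i : ι) : A :=
  (-Complex.I) • (g (i, false) * g (i, true))

lemma siteParity_comm (h : CliffordSystem g Θ) {i : ι} {p : ι × Bool} (hp : p.1 ≠ i) :
    g p * siteParity g i = siteParity g i * g p := by
  rw [siteParity, mul_smul_comm, smul_mul_assoc, ← mul_assoc,
    h.anti p (i, false) (by rintro rfl; exact hp rfl), neg_mul, mul_assoc,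
    h.anti p (i, true) (by rintro rfl; exact hp rfl), mul_neg, neg_neg, mul_assoc]

lemma siteParity_anticomm (h : CliffordSystem g Θ) (p : ι × Bool) :
    g p * siteParity g p.1 = -(siteParity g p.1 * g p) := by
  obtain ⟨i, b⟩ := p
  rw [siteParity, mul_smul_comm, smul_mul_assoc, ← smul_neg]
  congr 1
  cases b
  · rw [mul_assoc, h.anti (i, true) (i, false) (by simp), mul_neg, neg_neg]
  · rw [← mul_assoc, h.anti (i, true) (i, false) (by simp), neg_mul]

lemma siteParity_sq (h : CliffordSystem g Θ) (i : ι) : siteParity g i * siteParity g i = 1 := by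
  have e : g (i, false) * g (i, true) * (g (i, false) * g (i, true)) = -1 := by
    rw [mul_assoc, ← mul_assoc (g (i, true)), h.anti (i, true) (i, false) (by simp), neg_mul,
      mul_neg, mul_assoc, h.sq, mul_one, h.sq]
  rw [siteParity, smul_mul_smul_comm, e]
  simp

lemma parity_siteParity (h : CliffordSystem g Θ) (i : ι) :
    Θ (siteParity g i) = siteParity g i := by
  rw [siteParity, map_smul, map_mul, h.odd, h.odd, neg_mul_neg]

lemma listParity_comm (h : CliffordSystem g Θ) {p : ι × Bool} (l : List ι) (hp : p.1 ∉ l) :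
    g p * (l.map (siteParity g)).prod = (l.map (siteParity g)).prod * g p := by
  induction l with
  | nil => simp
  | cons i l ih =>
    rw [List.mem_cons, not_or] at hp
    rw [List.map_cons, List.prod_cons, ← mul_assoc, h.siteParity_comm hp.1, mul_assoc, ih hp.2,
      mul_assoc]

lemma listParity_anticomm (h : CliffordSystem g Θ) {p : ι × Bool} (l : List ι) (hl : l.Nodup)
    (hp : p.1 ∈ l) :
    g p * (l.map (siteParity g)).prod = -((l.map (siteParity g)).prod * g p) := by
  induction l with
  | nil => simp at hp
  | cons i l ih =>
    rw [List.nodup_cons] at hl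
    rw [List.map_cons, List.prod_cons, ← mul_assoc]
    by_cases hi : p.1 = i
    · subst hi
      rw [h.siteParity_anticomm, neg_mul, mul_assoc, h.listParity_comm l hl.1, mul_assoc]
    · rw [h.siteParity_comm hi, mul_assoc,
        ih hl.2 ((List.mem_cons.1 hp).resolve_left hi), mul_neg, mul_assoc]

lemma listParity_sq (h : CliffordSystem g Θ) (l : List ι) (hl : l.Nodup) :
    (l.map (siteParity g)).prod * (l.map (siteParity g)).prod = 1 := by
  induction l with
  | nil => simp
  | cons i l ih =>
    rw [List.nodup_cons] at hl
    have e : siteParity g i * (l.map (siteParity g)).prod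
        = (l.map (siteParity g)).prod * siteParity g i := by
      conv_lhs => rw [siteParity, smul_mul_assoc, mul_assoc,
        h.listParity_comm (p := (i, true)) l hl.1, ← mul_assoc,
        h.listParity_comm (p := (i, false)) l hl.1, mul_assoc]
      rw [siteParity, mul_smul_comm]
    rw [List.map_cons, List.prod_cons]
    nth_rewrite 2 [e]
    rw [mul_assoc, ← mul_assoc (l.map (siteParity g)).prod, ih hl.2, one_mul, h.siteParity_sq]

lemma parity_listParity (h : CliffordSystem g Θ) (l : List ι) :
    Θ (l.map (siteParity g)).prod = (l.map (siteParity g)).prod := by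
  induction l with
  | nil => simp
  | cons i l ih =>
    rw [List.map_cons, List.prod_cons, map_mul, ih, h.parity_siteParity]

end CliffordSystem

lemma carParityUnitary_eq {ν : ℕ} {A : Type*} [CStarAlgebra A] {a : (Fin ν → ℤ) → A}
    (hCAR₂ : ∀ i j, a i * a j + a j * a i = 0) (I : Finset (Fin ν → ℤ)) :
    carParityUnitary a I
      = (I.toList.map (CliffordSystem.siteParity (majorana a))).prod := by
  unfold carParityUnitary
  congr 2
  funext i
  exact site_eq_majorana hCAR₂ i

/-! ### Commutants of local algebras -/

/-- **commutants of `A(I)` in the CAR algebra.**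
(1) For a finite subset `I`, the commutant of `A(I)` in `A` equals
`A(I^c)₊ + v_I · A(I^c)₋`, where `v_I = ∏_{i∈I}(a_i* a_i − a_i a_i*)`;
(2) for an infinite subset `I`, the commutant of `A(I)` in `A` equals `A(I^c)₊`.
Here `A(K)₊` (resp. `A(K)₋`) denotes the even (resp. odd) part of `A(K)` under the parity
automorphism `Θ`. -/
theorem car_commutant_of_local_algebra
    {ν : ℕ} {A : Type*} [CStarAlgebra A]
    (a : (Fin ν → ℤ) → A)
    (hCAR₁ : ∀ i j, star (a i) * a j + a j * star (a i) = if i = j then (1 : A) else 0)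
    (hCAR₂ : ∀ i j, a i * a j + a j * a i = 0)
    (hgen : carSub a Set.univ = ⊤)
    (Θ : A ≃⋆ₐ[ℂ] A)
    (hΘ : ∀ i, Θ (a i) = - a i) :
    -- (1) finite regions
    (∀ I : Finset (Fin ν → ℤ), ∀ x : A,
      (∀ y ∈ carSub a (I : Set (Fin ν → ℤ)), x * y = y * x) ↔
      ∃ c d : A,
        c ∈ carSub a ((I : Set (Fin ν → ℤ))ᶜ) ∧ Θ c = c ∧
        d ∈ carSub a ((I : Set (Fin ν → ℤ))ᶜ) ∧ Θ d = -d ∧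
        x = c + carParityUnitary a I * d) ∧
    -- (2) infinite regions
    (∀ I : Set (Fin ν → ℤ), I.Infinite → ∀ x : A,
      (∀ y ∈ carSub a I, x * y = y * x) ↔ (x ∈ carSub a Iᶜ ∧ Θ x = x)) := by
  have h := majorana_system a hCAR₁ hCAR₂ hgen Θ hΘ
  -- `A(Kᶜ)` is the graded commutant of the generators over `K`.
  have gc : ∀ (K : Set (Fin ν → ℤ)) (x : A), x ∈ carSub a Kᶜ ↔
      ∀ p : (Fin ν → ℤ) × Bool, p.1 ∈ K → majorana a p * Θ x = x * majorana a p := by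
    intro K x
    rw [mem_carSub_iff]
    refine ⟨fun hx p hp => h.graded_comm (T := Prod.fst ⁻¹' Kᶜ) (fun hp' => hp' hp) hx, fun hx => ?_⟩
    exact h.mem_closure_of_graded_comm (T := Prod.fst ⁻¹' K) hx
  have half : ∀ x : A, x = (1 / 2 : ℂ) • (x + Θ x) + (1 / 2 : ℂ) • (x - Θ x) := by
    intro x
    module
  have comm_even : ∀ (p : (Fin ν → ℤ) × Bool) (x : A), majorana a p * x = x * majorana a p →
      majorana a p * (1 / 2 : ℂ) • (x + Θ x) = (1 / 2 : ℂ) • (x + Θ x) * majorana a p := by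
    intro p x hx
    rw [mul_smul_comm, smul_mul_assoc, mul_add, add_mul, hx, h.comm_parity hx]
  have comm_odd : ∀ (p : (Fin ν → ℤ) × Bool) (x : A), majorana a p * x = x * majorana a p →
      majorana a p * (1 / 2 : ℂ) • (x - Θ x) = (1 / 2 : ℂ) • (x - Θ x) * majorana a p := by
    intro p x hx
    rw [mul_smul_comm, smul_mul_assoc, mul_sub, sub_mul, hx, h.comm_parity hx]
  refine ⟨fun I x => ?_, fun I hI x => ?_⟩
  · have hv : ∀ p : (Fin ν → ℤ) × Bool, p.1 ∈ (I : Set (Fin ν → ℤ)) →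
        majorana a p * carParityUnitary a I = -(carParityUnitary a I * majorana a p) := by
      intro p hp
      rw [carParityUnitary_eq hCAR₂]
      exact h.listParity_anticomm _ I.nodup_toList (Finset.mem_toList.2 hp)
    have hv2 : carParityUnitary a I * carParityUnitary a I = 1 := by
      rw [carParityUnitary_eq hCAR₂]
      exact h.listParity_sq _ I.nodup_toList
    have hvΘ : Θ (carParityUnitary a I) = carParityUnitary a I := by
      rw [carParityUnitary_eq hCAR₂]
      exact h.parity_listParity _
    rw [commutes_carSub_iff]
    constructor
    · intro hx
      have hd : Θ (carParityUnitary a I * (1 / 2 : ℂ) • (x - Θ x))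
          = -(carParityUnitary a I * (1 / 2 : ℂ) • (x - Θ x)) := by
        rw [map_mul, hvΘ, h.odd_part, mul_neg]
      refine ⟨(1 / 2 : ℂ) • (x + Θ x), carParityUnitary a I * (1 / 2 : ℂ) • (x - Θ x),
        (gc _ _).2 fun p hp => ?_, h.even_part x, (gc _ _).2 fun p hp => ?_, hd, ?_⟩
      · rw [h.even_part]
        exact comm_even p x (hx p hp)
      · rw [hd, mul_neg, ← mul_assoc, hv p hp, neg_mul, neg_neg, mul_assoc,
          comm_odd p x (hx p hp), mul_assoc]
      · rw [← mul_assoc, hv2, one_mul]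
        exact half x
    · rintro ⟨c, d, hc, hcΘ, hd, hdΘ, rfl⟩ p hp
      have h1 := (gc _ _).1 hc p hp
      have h2 := (gc _ _).1 hd p hp
      rw [hcΘ] at h1
      rw [hdΘ, mul_neg] at h2
      rw [mul_add, add_mul, h1, ← mul_assoc, hv p hp, neg_mul, mul_assoc, mul_assoc _ d, ← h2,
        mul_neg]
  · rw [commutes_carSub_iff]
    constructor
    · intro hx
      have hT : (Prod.fst ⁻¹' I : Set ((Fin ν → ℤ) × Bool)).Infinite :=
        hI.preimage (by rw [Set.range_eq_univ.2 Prod.fst_surjective]; exact Set.subset_univ _)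
      have h0 := h.eq_zero_of_odd hT (h.odd_part x) fun p hp => comm_odd p x (hx p hp)
      have hxΘ : Θ x = x :=
        (sub_eq_zero.1 ((smul_eq_zero.1 h0).resolve_left (by norm_num))).symm
      refine ⟨(gc _ _).2 fun p hp => ?_, hxΘ⟩
      rw [hxΘ]
      exact hx p hp
    · rintro ⟨hx, hxΘ⟩ p hp
      have := (gc _ _).1 hx p hp
      rwa [hxΘ] at this
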